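/- Let E be the Euclidean space ℝ^n, let θ : ℤ → E be any sequence, let α > 0, let M ≥ 1 and D ≥ 1 be integers, and let ξ_1 ≥ ξ_2 ≥ … ≥ ξ_D ≥ 0 be reals. Let L_m : E → ℝ be differentiable with ∇L_m being C_m-Lipschitz (C_m ≥ 0), and suppose integers d, d', k satisfy 1 ≤ d' ≤ d ≤ D and C_m² ≤ ξ_d/(d α² M²). Then ‖∇L_m(θ^{k−d'}) − ∇L_m(θ^k)‖² ≤ C_m² ‖θ^{k−d'} − θ^k‖² ≤ (1/(α²M²)) Σ_{b=1}^D ξ_b ‖θ^{k+1−b} − θ^{k−b}‖². -/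

import Mathlib

open Finset

/-! The triangle inequality along `θ^{k−d'}, …, θ^k` followed by Cauchy–Schwarz bounds the squared
staleness by `d'` times the sum of the `d'` latest squared steps. Since the weights `ξ` decrease,
multiplying by `ξ_{d'}` gives at most the `ξ`-weighted sum of all `D` steps; and `ξ_d / d` decreases
in `d`, so the smoothness condition at `d` implies the one at `d'`. -/

theorem mul_sum_Icc_le_sum_Icc_mul_of_antitoneOn {ι R : Type*} [Preorder ι] [LocallyFiniteOrder ι]
    [Semiring R] [PartialOrder R] [IsOrderedRing R] {ξ w : ι → R} {a m D : ι}
    (hξ : AntitoneOn ξ (Set.Icc a D)) (hξ_nonneg : ∀ b ∈ Icc a D, 0 ≤ ξ b)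
    (hw : ∀ b ∈ Icc a D, 0 ≤ w b) (hmD : m ≤ D) :
    ξ m * ∑ b ∈ Icc a m, w b ≤ ∑ b ∈ Icc a D, ξ b * w b := by
  have hsub : Icc a m ⊆ Icc a D := Icc_subset_Icc_right hmD
  calc ξ m * ∑ b ∈ Icc a m, w b
      = ∑ b ∈ Icc a m, ξ m * w b := mul_sum _ _ _
    _ ≤ ∑ b ∈ Icc a m, ξ b * w b := by
        refine sum_le_sum fun b hb ↦ mul_le_mul_of_nonneg_right ?_ (hw b (hsub hb))
        obtain ⟨hab, hbm⟩ := mem_Icc.1 hb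
        exact hξ ⟨hab, hbm.trans hmD⟩ ⟨hab.trans hbm, hmD⟩ hbm
    _ ≤ ∑ b ∈ Icc a D, ξ b * w b :=
        sum_le_sum_of_subset_of_nonneg hsub fun b hb _ ↦ mul_nonneg (hξ_nonneg b hb) (hw b hb)

section Staleness

variable {X : Type*} [PseudoMetricSpace X] (θ : ℤ → X)

theorem dist_le_sum_dist_backward_steps (k : ℤ) (m : ℕ) :
    dist (θ (k - m)) (θ k) ≤ ∑ b ∈ Icc 1 m, dist (θ (k + 1 - b)) (θ (k - b)) := by
  have h := dist_le_Ico_sum_dist (fun b : ℕ ↦ θ (k + 1 - b)) (Nat.le_add_left 1 m)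
  simpa [dist_comm (θ k), Ico_add_one_right_eq_Icc, add_sub_add_right_eq_sub] using h

theorem dist_sq_le_mul_sum_dist_sq_backward_steps (k : ℤ) (m : ℕ) :
    dist (θ (k - m)) (θ k) ^ 2 ≤ m * ∑ b ∈ Icc 1 m, dist (θ (k + 1 - b)) (θ (k - b)) ^ 2 :=
  calc dist (θ (k - m)) (θ k) ^ 2
      ≤ (∑ b ∈ Icc 1 m, dist (θ (k + 1 - b)) (θ (k - b))) ^ 2 :=
        pow_le_pow_left₀ dist_nonneg (dist_le_sum_dist_backward_steps θ k m) 2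
    _ ≤ #(Icc 1 m) * ∑ b ∈ Icc 1 m, dist (θ (k + 1 - b)) (θ (k - b)) ^ 2 :=
        sq_sum_le_card_mul_sum_sq
    _ = m * ∑ b ∈ Icc 1 m, dist (θ (k + 1 - b)) (θ (k - b)) ^ 2 := by
        rw [Nat.card_Icc, Nat.add_sub_cancel]

theorem weight_mul_dist_sq_le_mul_sum_backward_steps {ξ : ℕ → ℝ} {m D : ℕ}
    (hξ : AntitoneOn ξ (Set.Icc 1 D)) (hξ_nonneg : ∀ b ∈ Icc 1 D, 0 ≤ ξ b) (k : ℤ)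
    (hm : m ∈ Icc 1 D) :
    ξ m * dist (θ (k - m)) (θ k) ^ 2 ≤
      m * ∑ b ∈ Icc 1 D, ξ b * dist (θ (k + 1 - b)) (θ (k - b)) ^ 2 :=
  calc ξ m * dist (θ (k - m)) (θ k) ^ 2
      ≤ ξ m * (m * ∑ b ∈ Icc 1 m, dist (θ (k + 1 - b)) (θ (k - b)) ^ 2) :=
        mul_le_mul_of_nonneg_left (dist_sq_le_mul_sum_dist_sq_backward_steps θ k m)
          (hξ_nonneg m hm)
    _ = m * (ξ m * ∑ b ∈ Icc 1 m, dist (θ (k + 1 - b)) (θ (k - b)) ^ 2) := mul_left_comm _ _ _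
    _ ≤ m * ∑ b ∈ Icc 1 D, ξ b * dist (θ (k + 1 - b)) (θ (k - b)) ^ 2 :=
        mul_le_mul_of_nonneg_left
          (mul_sum_Icc_le_sum_Icc_mul_of_antitoneOn hξ hξ_nonneg (fun _ _ ↦ sq_nonneg _)
            (mem_Icc.1 hm).2)
          m.cast_nonneg

end Staleness

theorem lazy_communication_trigger_general {X Y : Type*} [PseudoMetricSpace X]
    [PseudoMetricSpace Y] (θ : ℤ → X) {α : ℝ} (hα : 0 < α) {M D : ℕ} (hM : 1 ≤ M) {ξ : ℕ → ℝ}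
    (hξ : AntitoneOn ξ (Set.Icc 1 D)) (hξD : 0 ≤ ξ D) {g : X → Y} {C : NNReal}
    (hg : LipschitzWith C g) {d d' : ℕ} (k : ℤ) (hd' : 1 ≤ d') (hd'd : d' ≤ d) (hdD : d ≤ D)
    (hC : (C : ℝ) ^ 2 ≤ ξ d / (d * α ^ 2 * M ^ 2)) :
    dist (g (θ (k - d'))) (g (θ k)) ^ 2 ≤ C ^ 2 * dist (θ (k - d')) (θ k) ^ 2 ∧
      C ^ 2 * dist (θ (k - d')) (θ k) ^ 2 ≤ 1 / (α ^ 2 * M ^ 2) *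
        ∑ b ∈ Icc 1 D, ξ b * dist (θ (k + 1 - b)) (θ (k - b)) ^ 2 := by
  have hd'D : d' ≤ D := hd'd.trans hdD
  have hξ_nonneg : ∀ b ∈ Icc 1 D, 0 ≤ ξ b := fun b hb ↦ by
    obtain ⟨h1b, hbD⟩ := mem_Icc.1 hb
    exact hξD.trans (hξ ⟨h1b, hbD⟩ ⟨h1b.trans hbD, le_rfl⟩ hbD)
  have hd'_mem : d' ∈ Icc 1 D := mem_Icc.2 ⟨hd', hd'D⟩
  have hd'_pos : (0 : ℝ) < d' := Nat.cast_pos.2 hd'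
  have hM_pos : (0 : ℝ) < M := Nat.cast_pos.2 hM
  have hC_at_d' : (C : ℝ) ^ 2 ≤ ξ d' / (d' * α ^ 2 * M ^ 2) := by
    refine hC.trans (div_le_div₀ (hξ_nonneg d' hd'_mem) ?_ (by positivity) (by gcongr))
    exact hξ ⟨hd', hd'D⟩ ⟨hd'.trans hd'd, hdD⟩ hd'd
  refine ⟨?_, ?_⟩
  · rw [← mul_pow]
    exact pow_le_pow_left₀ dist_nonneg (hg.dist_le_mul _ _) 2
  · calc (C : ℝ) ^ 2 * dist (θ (k - d')) (θ k) ^ 2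
        ≤ ξ d' / (d' * α ^ 2 * M ^ 2) * dist (θ (k - d')) (θ k) ^ 2 := by gcongr
      _ = ξ d' * dist (θ (k - d')) (θ k) ^ 2 / (d' * α ^ 2 * M ^ 2) := div_mul_eq_mul_div _ _ _
      _ ≤ d' * (∑ b ∈ Icc 1 D, ξ b * dist (θ (k + 1 - b)) (θ (k - b)) ^ 2) /
            (d' * α ^ 2 * M ^ 2) := by
          gcongr ?_ / _
          exact weight_mul_dist_sq_le_mul_sum_backward_steps θ hξ hξ_nonneg k hd'_mem
      _ = 1 / (α ^ 2 * M ^ 2) *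
            ∑ b ∈ Icc 1 D, ξ b * dist (θ (k + 1 - b)) (θ (k - b)) ^ 2 := by field_simp

/-- Core of Lemma 4 (lazy communication): a worker with small smoothness constant
whose stale copy is `θ^{k−d'}` satisfies both trigger conditions at iteration `k`. -/
theorem lazy_communication_trigger {n : ℕ}
    (θ : ℤ → EuclideanSpace ℝ (Fin n))
    (α : ℝ) (hα : 0 < α)
    (M D : ℕ) (hM : 1 ≤ M) (hD : 1 ≤ D)
    (ξ : ℕ → ℝ)
    (hξmono : ∀ d : ℕ, 1 ≤ d → d < D → ξ (d + 1) ≤ ξ d)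
    (hξD : 0 ≤ ξ D)
    (Lm : EuclideanSpace ℝ (Fin n) → ℝ) (hdiff : Differentiable ℝ Lm)
    (C : ℝ) (hC : 0 ≤ C)
    (hlip : ∀ x y, ‖gradient Lm x - gradient Lm y‖ ≤ C * ‖x - y‖)
    (d d' : ℕ) (k : ℤ) (hd'1 : 1 ≤ d') (hd'd : d' ≤ d) (hdD : d ≤ D)
    (hCd : C ^ 2 ≤ ξ d / ((d : ℝ) * α ^ 2 * (M : ℝ) ^ 2)) :
    ‖gradient Lm (θ (k - (d' : ℤ))) - gradient Lm (θ k)‖ ^ 2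
        ≤ C ^ 2 * ‖θ (k - (d' : ℤ)) - θ k‖ ^ 2
    ∧ C ^ 2 * ‖θ (k - (d' : ℤ)) - θ k‖ ^ 2
        ≤ (1 / (α ^ 2 * (M : ℝ) ^ 2)) *
            ∑ b ∈ Finset.Icc 1 D, ξ b * ‖θ (k + 1 - (b : ℤ)) - θ (k - (b : ℤ))‖ ^ 2 := by
  have hξ : AntitoneOn ξ (Set.Icc 1 D) :=
    antitoneOn_of_add_one_le Set.ordConnected_Icc fun b _ hb hb' ↦ hξmono b hb.1 hb'.2
  lift C to NNReal using hC
  simpa only [dist_eq_norm] using lazy_communication_trigger_general θ hα hM hξ hξD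
    (lipschitzWith_iff_norm_sub_le.2 hlip) k hd'1 hd'd hdD hCd
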